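/- For an arbitrary prime power q, an integer r ≥ 2, and any divisor t of q−1, the graph G(q^{r−1}, t·(1+q+⋯+q^{r−2})) is K_{r, t^{r−1}(r−1)!+1}-free; concretely, any r pairwise distinct vertices of this graph have at most t^{r−1}·(r−1)! common neighbors. -/

import Mathlib

/-- The scaling relation by the subgroup `H ≤ Fˣ` on nonzero pairs of field elements:
`(a₁,b₁) ∼ (a₂,b₂)` iff there is `h ∈ H` with `a₁ = h·a₂` and `b₁ = h·b₂`. -/
def Grel {F : Type} [Field F] (H : Subgroup Fˣ) (p p' : {p : F × F // p ≠ 0}) : Prop :=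
  ∃ h ∈ H, p.1.1 = (h : F) * p'.1.1 ∧ p.1.2 = (h : F) * p'.1.2

/-- The vertex set of the graph `G(q,t)`: nonzero pairs modulo scaling by `H`. -/
def GVertex (F : Type) [Field F] (H : Subgroup Fˣ) : Type :=
  Quot (Grel H)

/-- Membership of a field element in the subgroup `H ≤ Fˣ`. -/
def memH {F : Type} [Field F] (H : Subgroup Fˣ) (x : F) : Prop :=
  ∃ h ∈ H, (h : F) = x

/-- Adjacency in the graph `G(q,t)`: `⟨a,b⟩` and `⟨x,y⟩` are adjacent iff `a·x + b·y ∈ H`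
(this condition is independent of the chosen representatives). -/
def GAdj {F : Type} [Field F] (H : Subgroup Fˣ) (u v : GVertex F H) : Prop :=
  ∃ p p' : {p : F × F // p ≠ 0},
    u = Quot.mk (Grel H) p ∧ v = Quot.mk (Grel H) p' ∧
      memH H (p.1.1 * p'.1.1 + p.1.2 * p'.1.2)

section
open MvPolynomial
open scoped Pointwise

lemma int_of_val {R S : Type} [CommRing R] [CommRing S] [IsDomain S] [Algebra R S] (x : S)
    (h : ∀ V : ValuationSubring (FractionRing S),
      (∀ r : R, algebraMap S (FractionRing S) (algebraMap R S r) ∈ V) →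
        algebraMap S (FractionRing S) x ∈ V) : IsIntegral R x := by
  set L := FractionRing S
  let f : R →+* L := (algebraMap S L).comp (algebraMap R S)
  have h1 : algebraMap S L x ∈
      (integralClosure (Subring.closure (Set.range f)) L).toSubring := by
    rw [← iInf_valuationSubring_superset]
    rw [Subring.mem_iInf]
    rintro ⟨V, hV⟩
    exact h V (fun r => hV ⟨r, rfl⟩)
  have h2 : IsIntegral (Subring.closure (Set.range f)) (algebraMap S L x) := h1
  have hcl : Subring.closure (Set.range f) = f.range := by
    rw [← RingHom.coe_range, Subring.closure_eq]
  rw [hcl] at h2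
  let : Algebra R f.range := f.rangeRestrict.toAlgebra
  have : IsScalarTower R f.range L := IsScalarTower.of_algebraMap_eq' rfl
  have : Algebra.IsIntegral R f.range :=
    Algebra.isIntegral_of_surjective f.rangeRestrict_surjective
  have h3 : IsIntegral R (algebraMap S L x) := isIntegral_trans _ h2
  exact (isIntegral_algebraMap_iff (IsFractionRing.injective S L)).1 h3

lemma val_key {F L ι κ : Type} [Field F] [Field L] [Algebra F L] [Fintype ι] [Fintype κ]
    (hc : Fintype.card ι = Fintype.card κ)
    (a : ι → κ → F) (ha : ∀ j i i', i ≠ i' → a i j ≠ a i' j) (x : κ → L)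
    (V : ValuationSubring L) (hF : ∀ c : F, algebraMap F L c ∈ V)
    (hg : ∀ i, ∏ j, (x j - algebraMap F L (a i j)) ∈ V) (j : κ) : x j ∈ V := by
  classical
  by_contra hj
  have hlt : ∀ i, 1 < V.valuation (x j - algebraMap F L (a i j)) := by
    intro i
    rw [← not_le, V.valuation_le_one_iff]
    intro hh
    exact hj (by simpa using V.add_mem _ _ hh (hF (a i j)))
  have hex : ∀ i, ∃ k, k ≠ j ∧ V.valuation (x k - algebraMap F L (a i k)) < 1 := by
    intro i
    by_contra! hcon
    have h1 := (V.valuation_le_one_iff _).2 (hg i)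
    rw [map_prod, ← Finset.mul_prod_erase _ _ (Finset.mem_univ j)] at h1
    have h2 : 1 ≤ ∏ k ∈ Finset.univ.erase j, V.valuation (x k - algebraMap F L (a i k)) := by
      apply Finset.one_le_prod'
      intro k hk
      exact hcon k (Finset.ne_of_mem_erase hk)
    exact absurd h1 (not_le.2 (lt_of_lt_of_le (hlt i) (le_mul_of_one_le_right' h2)))
  choose k hkj hk using hex
  have hni : ¬ Function.Injective k := by
    intro hi
    have hs := (Fintype.bijective_iff_injective_and_card k).2 ⟨hi, hc⟩
    obtain ⟨i, hi⟩ := hs.2 j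
    exact hkj i hi
  rw [Function.not_injective_iff] at hni
  obtain ⟨i, i', he, hne⟩ := hni
  have h1 := hk i
  have h2 := hk i'
  rw [← he] at h2
  have h3 : V.valuation (algebraMap F L (a i' (k i) - a i (k i))) < 1 := by
    have := V.valuation.map_sub_lt h1 h2
    convert this using 2
    rw [map_sub]; ring
  set c := a i' (k i) - a i (k i) with hcdef
  have hc0 : c ≠ 0 := sub_ne_zero.2 (ha _ _ _ hne.symm)
  have h4 := (V.valuation_le_one_iff _).2 (hF c⁻¹)
  have h5 : V.valuation (algebraMap F L c) * V.valuation (algebraMap F L c⁻¹) = 1 := by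
    rw [← map_mul, ← map_mul, mul_inv_cancel₀ hc0]; simp
  have h6 : V.valuation (algebraMap F L c) * V.valuation (algebraMap F L c⁻¹) < 1 :=
    lt_of_le_of_lt (mul_le_of_le_one_right' h4) h3
  exact absurd h5 h6.ne

lemma sub_C_eval_mem {F κ : Type} [Field F] (P : κ → F) (p : MvPolynomial κ F)
    (J : Ideal (MvPolynomial κ F)) (hJ : ∀ j, X j - C (P j) ∈ J) : p - C (eval P p) ∈ J := by
  rw [← Ideal.Quotient.eq]
  have : (Ideal.Quotient.mk J) = ((Ideal.Quotient.mk J).comp C).comp (eval P) := by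
    apply MvPolynomial.ringHom_ext
    · intro r; simp
    · intro j; simpa using Ideal.Quotient.eq.2 (hJ j)
  exact congrArg (fun f => f p) this

/-- A polynomial vanishing at all the points `P_σ` lies in the ideal. -/
lemma mem_of_vanish {F ι κ : Type} [Field F] [Fintype ι] [Fintype κ] [DecidableEq ι]
    [DecidableEq κ] (hc : Fintype.card ι = Fintype.card κ)
    (a : ι → κ → F) (ha : ∀ j i i', i ≠ i' → a i j ≠ a i' j)
    (I : Ideal (MvPolynomial κ F)) (hI : ∀ i, ∏ j, (X j - C (a i j)) ∈ I)
    (p : MvPolynomial κ F) (hp : ∀ σ : ι ≃ κ, eval (fun j => a (σ.symm j) j) p = 0) :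
    p ∈ I := by
  classical
  let J : (ι → κ) → Ideal (MvPolynomial κ F) := fun f =>
    Ideal.span (Set.range fun i => X (f i) - C (a i (f i)))
  have hgen : ∀ f i, X (f i) - C (a i (f i)) ∈ J f := fun f i => Ideal.subset_span ⟨i, rfl⟩
  have hcop : ∀ (K : Ideal (MvPolynomial κ F)) (j : κ) (i i' : ι), i ≠ i' →
      X j - C (a i j) ∈ K → X j - C (a i' j) ∈ K → K = ⊤ := by
    intro K j i i' hne h1 h2
    have h3 := K.sub_mem h2 h1
    have h4 : C (a i j - a i' j) ∈ K := by
      convert h3 using 1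
      rw [C_sub]; ring
    exact Ideal.eq_top_of_isUnit_mem _ h4
      ((isUnit_iff_ne_zero.2 (sub_ne_zero.2 (ha j i i' hne))).map C)
  have hprod : ∏ f, J f ≤ I := by
    have : ∏ f, J f = Ideal.span (∏ f : ι → κ, Set.range fun i => X (f i) - C (a i (f i))) := by
      simp only [J]
      rw [Ideal.prod_span]
    rw [this, Ideal.span_le]
    intro y hy
    rw [Set.mem_finsetProd] at hy
    obtain ⟨g, hg, rfl⟩ := hy
    have hg' : ∀ f, ∃ i, X (f i) - C (a i (f i)) = g f := fun f => hg (Finset.mem_univ f)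
    choose c hcc using hg'
    have : ∃ i, ∀ j, ∃ f, c f = i ∧ f i = j := by
      by_contra! hcon
      choose w hw using hcon
      exact hw (c w) w rfl rfl
    obtain ⟨i, hi⟩ := this
    choose s hs1 hs2 using hi
    have hsinj : Function.Injective s := by
      intro j j' h
      rw [← hs2 j, ← hs2 j', h]
    have h1 : ∏ j, (X j - C (a i j)) = ∏ f ∈ Finset.univ.image s, g f := by
      rw [Finset.prod_image (fun _ _ _ _ h => hsinj h)]
      refine Finset.prod_congr rfl fun j _ => ?_
      rw [← hcc, hs1, hs2]
    have h2 : ∏ f ∈ Finset.univ.image s, g f ∣ ∏ f, g f :=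
      Finset.prod_dvd_prod_of_subset _ _ _ (Finset.subset_univ _)
    exact I.mem_of_dvd h2 (h1 ▸ hI i)
  have hpair : ∀ f f', f ≠ f' → IsCoprime (J f) (J f') := by
    intro f f' hff
    rw [Ideal.isCoprime_iff_sup_eq]
    by_cases hb : Function.Injective f
    · have hbij := (Fintype.bijective_iff_injective_and_card f).2 ⟨hb, hc⟩
      obtain ⟨i, hi⟩ := Function.ne_iff.1 hff
      obtain ⟨i', hi'⟩ := hbij.2 (f' i)
      refine hcop _ (f' i) i i' ?_ ?_ ?_
      · rintro rfl; exact hi hi'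
      · exact Ideal.mem_sup_right (hgen f' i)
      · rw [← hi']; exact Ideal.mem_sup_left (hgen f i')
    · rw [Function.not_injective_iff] at hb
      obtain ⟨i, i', he, hne⟩ := hb
      have : J f = ⊤ := hcop _ (f i) i i' hne (hgen f i) (by rw [he]; exact hgen f i')
      rw [this, top_sup_eq]
  have hinf : (⨅ f, J f) ≤ I := by
    refine le_trans (le_of_eq ?_) hprod
    rw [Ideal.prod_eq_iInf_of_pairwise_isCoprime (s := Finset.univ)]
    · simp
    · intro f _ f' _ h
      exact hpair f f' h
  apply hinf
  rw [Ideal.mem_iInf]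
  intro f
  by_cases hb : Function.Injective f
  · have hbij := (Fintype.bijective_iff_injective_and_card f).2 ⟨hb, hc⟩
    let σ := Equiv.ofBijective f hbij
    have := sub_C_eval_mem (fun j => a (σ.symm j) j) p (J f) (by
      intro j
      have := hgen f (σ.symm j)
      rwa [show f (σ.symm j) = j from σ.apply_symm_apply j] at this)
    simpa [hp σ] using this
  · rw [Function.not_injective_iff] at hb
    obtain ⟨i, i', he, hne⟩ := hb
    have : J f = ⊤ := hcop _ (f i) i i' hne (hgen f i) (by rw [he]; exact hgen f i')
    rw [this]; trivial

lemma exists_lagrange {F ι κ : Type} [Field F] [Fintype ι] [Fintype κ] [DecidableEq ι]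
    [DecidableEq κ]
    (a : ι → κ → F) (ha : ∀ j i i', i ≠ i' → a i j ≠ a i' j) (σ : ι ≃ κ) :
    ∃ e : MvPolynomial κ F, ∀ τ : ι ≃ κ, eval (fun j => a (τ.symm j) j) e =
      if τ = σ then 1 else 0 := by
  classical
  have : ∀ τ : ι ≃ κ, ∃ u : MvPolynomial κ F, eval (fun j => a (σ.symm j) j) u = 1 ∧
      (τ ≠ σ → eval (fun j => a (τ.symm j) j) u = 0) := by
    intro τ
    by_cases h : τ = σ
    · exact ⟨1, by simp, fun h' => absurd h h'⟩
    · have h' : ∃ j, τ.symm j ≠ σ.symm j := by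
        by_contra! hcon
        exact h (by rw [← τ.symm_symm, ← σ.symm_symm, Equiv.ext hcon])
      obtain ⟨j, hj⟩ := h'
      have h0 : a (σ.symm j) j - a (τ.symm j) j ≠ 0 := sub_ne_zero.2 (ha _ _ _ hj.symm)
      refine ⟨C (a (σ.symm j) j - a (τ.symm j) j)⁻¹ * (X j - C (a (τ.symm j) j)), ?_, ?_⟩
      · simp [h0]
      · simp
  choose u hu1 hu2 using this
  refine ⟨∏ τ, u τ, fun τ => ?_⟩
  rw [map_prod]
  split_ifs with h
  · subst h
    exact Finset.prod_eq_one fun τ' _ => hu1 τ'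
  · exact Finset.prod_eq_zero (Finset.mem_univ τ) (hu2 τ h)
/-- Kollár–Rónyai–Szabó lemma (version counting the values of one coordinate). -/
theorem krs {F ι κ : Type} [Field F] [Fintype ι] [Fintype κ]
    (hc : Fintype.card ι = Fintype.card κ)
    (a : ι → κ → F) (ha : ∀ j i i', i ≠ i' → a i j ≠ a i' j) (b : ι → F) (j0 : κ)
    (T : Finset F) (P : F → κ → F) (hP0 : ∀ u ∈ T, P u j0 = u)
    (hP : ∀ u ∈ T, ∀ i, ∏ j, (P u j - a i j) = b i) :
    T.card ≤ (Fintype.card ι).factorial := by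
  classical
  let g : ι → MvPolynomial κ F := fun i => ∏ j, (X j - C (a i j))
  let φ : MvPolynomial ι F →ₐ[F] MvPolynomial κ F := aeval g
  let : Algebra (MvPolynomial ι F) (MvPolynomial κ F) := φ.toRingHom.toAlgebra
  have hmap : ∀ p, algebraMap (MvPolynomial ι F) (MvPolynomial κ F) p = φ p := fun p => rfl
  have : IsScalarTower F (MvPolynomial ι F) (MvPolynomial κ F) :=
    IsScalarTower.of_algebraMap_eq (fun c => by
      rw [hmap, AlgHom.commutes])
  have hX : ∀ j : κ, IsIntegral (MvPolynomial ι F) (X j : MvPolynomial κ F) := by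
    intro j
    apply int_of_val
    intro V hV
    refine val_key hc a ha (fun j => algebraMap _ (FractionRing (MvPolynomial κ F)) (X j)) V
      ?_ ?_ j
    · intro c
      have := hV (C c)
      rw [hmap] at this
      simp only [φ, aeval_C] at this
      rwa [← IsScalarTower.algebraMap_apply] at this
    · intro i
      have := hV (X i)
      rw [hmap] at this
      simp only [φ, aeval_X, g, map_prod, map_sub] at this
      convert this using 4
      rw [← algebraMap_eq, ← IsScalarTower.algebraMap_apply]
  have hIntegral : Algebra.IsIntegral (MvPolynomial ι F) (MvPolynomial κ F) := by
    constructor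
    intro p
    induction p using MvPolynomial.induction_on with
    | C c =>
      rw [← algebraMap_eq, IsScalarTower.algebraMap_apply F (MvPolynomial ι F)]
      exact isIntegral_algebraMap
    | add p q hp hq => exact hp.add hq
    | mul_X p n hp => exact hp.mul (hX n)
  have hft : Algebra.FiniteType (MvPolynomial ι F) (MvPolynomial κ F) :=
    Algebra.FiniteType.of_restrictScalars_finiteType F _ _
  have hfin : Module.Finite (MvPolynomial ι F) (MvPolynomial κ F) := Algebra.IsIntegral.finite
  have hinj : Function.Injective φ := by
    have halg : Algebra.IsAlgebraic (Algebra.adjoin F (Set.range g)) (MvPolynomial κ F) := by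
      have : Algebra.IsIntegral (Algebra.adjoin F (Set.range g)) (MvPolynomial κ F) := by
        constructor
        intro p
        obtain ⟨f, hf, hfp⟩ := hIntegral.1 p
        have hr : φ.range = Algebra.adjoin F (Set.range g) :=
          (Algebra.adjoin_range_eq_range_aeval F g).symm
        let ψ : MvPolynomial ι F →+* Algebra.adjoin F (Set.range g) :=
          φ.toRingHom.codRestrict (Algebra.adjoin F (Set.range g)).toSubring (fun x => by
            change φ x ∈ Algebra.adjoin F (Set.range g)
            rw [← hr]; exact ⟨x, rfl⟩)
        refine ⟨f.map ψ, hf.map _, ?_⟩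
        rw [Polynomial.eval₂_map]
        exact hfp
      infer_instance
    have := Algebra.IsAlgebraic.isTranscendenceBasis_of_le_trdeg_of_finite F g (by
      rw [MvPolynomial.trdeg_of_isDomain]
      simp [hc])
    exact this.1
  have hfs : FaithfulSMul (MvPolynomial ι F) (MvPolynomial κ F) :=
    (faithfulSMul_iff_algebraMap_injective _ _).2 hinj
  have htf : Module.IsTorsionFree (MvPolynomial ι F) (MvPolynomial κ F) := inferInstance
  -- generic rank bound
  choose e he using exists_lagrange a ha
  let M : Submodule (MvPolynomial ι F) (MvPolynomial κ F) :=
    Submodule.span _ (Set.range e)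
  let 𝔪 : Ideal (MvPolynomial ι F) := Ideal.span (Set.range X)
  have hcover : (⊤ : Submodule (MvPolynomial ι F) (MvPolynomial κ F)) ≤ M ⊔ 𝔪 • ⊤ := by
    intro p _
    have h1 : p - ∑ σ : ι ≃ κ, C (eval (fun j => a (σ.symm j) j) p) * e σ ∈
        𝔪.map (algebraMap (MvPolynomial ι F) (MvPolynomial κ F)) := by
      apply mem_of_vanish hc a ha
      · intro i
        have := Ideal.mem_map_of_mem (algebraMap (MvPolynomial ι F) (MvPolynomial κ F))
          (show X i ∈ 𝔪 from Ideal.subset_span ⟨i, rfl⟩)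
        rw [hmap] at this
        simpa only [φ, aeval_X] using this
      · intro τ
        simp [he]
    have h2 : ∑ σ : ι ≃ κ, C (eval (fun j => a (σ.symm j) j) p) * e σ ∈ M := by
      refine Submodule.sum_mem _ fun σ _ => ?_
      have := M.smul_mem (C (eval (fun j => a (σ.symm j) j) p)) (Submodule.subset_span ⟨σ, rfl⟩)
      rw [Algebra.smul_def, hmap] at this
      simpa only [φ, aeval_C, algebraMap_eq] using this
    rw [Ideal.smul_top_eq_map]
    rw [← sub_add_cancel p (∑ σ : ι ≃ κ, C (eval (fun j => a (σ.symm j) j) p) * e σ)]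
    exact Submodule.add_mem _ (Submodule.mem_sup_right h1) (Submodule.mem_sup_left h2)
  obtain ⟨f, hf1, hf2⟩ := Submodule.exists_sub_one_mem_and_smul_le_of_fg_of_le_sup
    (Module.finite_def.1 hfin) le_rfl hcover
  have hf0 : f ≠ 0 := by
    rintro rfl
    have h1 : 𝔪 ≤ RingHom.ker (eval (0 : ι → F)) := by
      rw [Ideal.span_le]
      rintro _ ⟨i, rfl⟩
      simp
    have := h1 hf1
    simp at this
  have hfM : ∀ p : MvPolynomial κ F, f • p ∈ M := fun p =>
    hf2 (Submodule.smul_mem_pointwise_smul _ _ _ trivial)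
  set N := (Fintype.card ι).factorial with hN
  have hcardEq : Fintype.card (ι ≃ κ) = N := Fintype.card_equiv (Fintype.equivOfCardEq hc)
  set θ : MvPolynomial κ F := X j0
  obtain ⟨p, hp0, hpdeg, hpθ⟩ : ∃ p : Polynomial (MvPolynomial ι F), p ≠ 0 ∧ p.natDegree ≤ N ∧
      Polynomial.aeval θ p = 0 := by
    have hnli : ¬ LinearIndependent (MvPolynomial ι F) (fun k : Fin (N + 1) => f • θ ^ (k : ℕ)) := by
      intro hli
      have h1 := linearIndependent_le_span_aux' _ hli (Set.range e) (by
        rintro _ ⟨k, rfl⟩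
        exact hfM _)
      have h2 := Fintype.card_range_le e
      rw [hcardEq] at h2
      rw [Fintype.card_fin] at h1
      omega
    rw [Fintype.not_linearIndependent_iff] at hnli
    obtain ⟨c, hc1, k, hk⟩ := hnli
    refine ⟨∑ k : Fin (N + 1), Polynomial.monomial (k : ℕ) (c k), ?_, ?_, ?_⟩
    · intro h
      apply hk
      have := congrArg (fun q => Polynomial.coeff q k) h
      simpa [Polynomial.finsetSum_coeff, Polynomial.coeff_monomial, Fin.val_inj] using this
    · refine Polynomial.natDegree_sum_le_of_forall_le _ _ fun k _ => ?_
      exact (Polynomial.natDegree_monomial_le _).trans (by omega)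
    · have : f • Polynomial.aeval θ (∑ k : Fin (N + 1), Polynomial.monomial (k : ℕ) (c k)) = 0 := by
        rw [← hc1, map_sum, Finset.smul_sum]
        refine Finset.sum_congr rfl fun k _ => ?_
        rw [Polynomial.aeval_monomial, ← Algebra.smul_def, smul_comm]
      exact (smul_eq_zero.1 this).resolve_left hf0
  have hdeg : (minpoly (MvPolynomial ι F) θ).natDegree ≤ N :=
    (Polynomial.natDegree_le_natDegree
      (minpoly.IsIntegrallyClosed.degree_le_of_ne_zero hp0 hpθ)).trans hpdeg
  have hmon := minpoly.monic (hX j0)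
  let Q : Polynomial F := (minpoly (MvPolynomial ι F) θ).map (eval b)
  have hQm : Q.Monic := hmon.map _
  have hroot : ∀ u ∈ T, Q.IsRoot u := by
    intro u hu
    have hcomp : (eval (P u)).comp (algebraMap (MvPolynomial ι F) (MvPolynomial κ F)) = eval b := by
      apply MvPolynomial.ringHom_ext
      · intro r
        simp only [RingHom.comp_apply, hmap, φ, aeval_C, algebraMap_eq, eval_C]
      · intro i
        simp only [RingHom.comp_apply, hmap, φ, aeval_X, eval_X, g, map_prod, map_sub, eval_C]
        exact hP u hu i
    have h1 := congrArg (eval (P u)) (minpoly.aeval (MvPolynomial ι F) θ)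
    rw [Polynomial.aeval_def, Polynomial.hom_eval₂, hcomp, map_zero] at h1
    rw [show eval (P u) θ = u by simp [θ, hP0 u hu]] at h1
    rw [Polynomial.IsRoot, Polynomial.eval_map, h1]
  calc T.card ≤ Q.roots.toFinset.card := Finset.card_le_card fun u hu => by
        rw [Multiset.mem_toFinset, Polynomial.mem_roots hQm.ne_zero]; exact hroot u hu
    _ ≤ Multiset.card Q.roots := Multiset.toFinset_card_le _
    _ ≤ Q.natDegree := Q.card_roots'
    _ ≤ N := Polynomial.natDegree_map_le.trans hdeg

end

lemma Grel_refl' {F : Type} [Field F] (H : Subgroup Fˣ) (p : {p : F × F // p ≠ 0}) :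
    Grel H p p := ⟨1, H.one_mem, by simp, by simp⟩

lemma Grel_equiv {F : Type} [Field F] (H : Subgroup Fˣ) : Equivalence (Grel H) := by
  refine ⟨Grel_refl' H, ?_, ?_⟩
  · rintro p p' ⟨h, hh, h1, h2⟩
    exact ⟨h⁻¹, H.inv_mem hh, by rw [h1]; simp, by rw [h2]; simp⟩
  · rintro p p' p'' ⟨h, hh, h1, h2⟩ ⟨k, hk, k1, k2⟩
    exact ⟨h * k, H.mul_mem hh hk, by rw [h1, k1]; push_cast; ring,
      by rw [h2, k2]; push_cast; ring⟩

lemma Grel_of_eq {F : Type} [Field F] (H : Subgroup Fˣ) {p p' : {p : F × F // p ≠ 0}}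
    (h : Quot.mk (Grel H) p = Quot.mk (Grel H) p') : Grel H p p' := by
  have := Quot.eqvGen_exact h
  rwa [(Grel_equiv H).eqvGen_iff] at this

lemma memH_mul {F : Type} [Field F] {H : Subgroup Fˣ} {x y : F} (hx : memH H x) (hy : memH H y) :
    memH H (x * y) := by
  obtain ⟨h, hh, rfl⟩ := hx
  obtain ⟨k, hk, rfl⟩ := hy
  exact ⟨h * k, H.mul_mem hh hk, by simp⟩

lemma GAdj_mk {F : Type} [Field F] {H : Subgroup Fˣ} {p p' : {p : F × F // p ≠ 0}}
    (h : GAdj H (Quot.mk _ p) (Quot.mk _ p')) :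
    memH H (p.1.1 * p'.1.1 + p.1.2 * p'.1.2) := by
  obtain ⟨s, s', h1, h2, h3⟩ := h
  obtain ⟨k, hk, k1, k2⟩ := Grel_of_eq H h1
  obtain ⟨l, hl, l1, l2⟩ := Grel_of_eq H h2
  have := memH_mul (memH_mul ⟨k, hk, rfl⟩ ⟨l, hl, rfl⟩) h3
  convert this using 1
  rw [k1, k2, l1, l2]; ring

/-- Main counting step, in coordinates. -/
lemma count_u {q m t : ℕ} (hq : IsPrimePow q) (hm : 0 < m)
    {F : Type} [Field F] [Fintype F] (hF : Fintype.card F = q ^ m) (ht : 0 < t)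
    (c d : Fin m → F) (hc : Function.Injective c) (U : Finset F)
    (hU : ∀ u ∈ U, ∀ i, ((d i * (u + c i)) ^ (∑ j ∈ Finset.range m, q ^ j)) ^ t = 1) :
    U.card ≤ t ^ m * m.factorial := by
  classical
  obtain ⟨p, k, hp, hk, rfl⟩ := hq
  have hpp : p.Prime := hp.nat_prime
  have : Fact p.Prime := ⟨hpp⟩
  have hchar : CharP F p := by
    obtain ⟨p', hp'⟩ := CharP.exists F
    obtain ⟨n, hp'p, hn⟩ := FiniteField.card F p'
    rw [hF, ← pow_mul] at hn
    have : p = p' := by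
      have h1 : p ∣ p' ^ (n : ℕ) := by
        rw [← hn]; exact dvd_pow_self _ (by positivity)
      exact (Nat.prime_dvd_prime_iff_eq hpp hp'p).1 (hpp.dvd_of_dvd_pow h1)
    rw [this]; exact hp'
  set q := p ^ k with hqdef
  set s := ∑ j ∈ Finset.range m, q ^ j with hs
  let ζ : F → Fin m → F := fun u i => (d i * (u + c i)) ^ s
  let Z : Finset F := (Polynomial.nthRoots t (1 : F)).toFinset
  have hZ : Z.card ≤ t := (Multiset.toFinset_card_le _).trans (Polynomial.card_nthRoots t 1)
  have hfrob : ∀ (j : ℕ) (x y : F), (x + y) ^ q ^ j = x ^ q ^ j + y ^ q ^ j := by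
    intro j x y
    rw [hqdef, ← pow_mul, add_pow_char_pow]
  have hfrobs : ∀ (j : ℕ) (x y : F), (x - y) ^ q ^ j = x ^ q ^ j - y ^ q ^ j := by
    intro j x y
    rw [hqdef, ← pow_mul, sub_pow_char_pow]
  have hnorm : ∀ x : F, x ^ s = ∏ j : Fin m, x ^ q ^ (j : ℕ) := by
    intro x
    rw [hs, ← Finset.prod_pow_eq_pow_sum, Finset.prod_range]
  have hqpos : 0 < q := pow_pos hpp.pos k
  have hfib : ∀ z ∈ U.image ζ, (U.filter fun u => ζ u = z).card ≤ m.factorial := by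
    intro z hz
    have key := krs (ι := Fin m) (κ := Fin m) rfl (fun i j => (- c i) ^ q ^ (j : ℕ)) (by
      intro j i i' hne h
      have h1 : (- c i - - c i') ^ q ^ (j : ℕ) = 0 := by rw [hfrobs, sub_eq_zero]; exact h
      have h2 := eq_zero_of_pow_eq_zero h1
      exact hne (hc (by linear_combination - h2)))
      (fun i => z i / d i ^ s) ⟨0, hm⟩ (U.filter fun u => ζ u = z)
      (fun u j => u ^ q ^ (j : ℕ)) (by simp) (by
        intro u hu i
        rw [Finset.mem_filter] at hu
        have hd : d i ≠ 0 := by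
          intro h0
          have := hU u hu.1 i
          have hs0 : s ≠ 0 := by
            rw [hs]
            refine (Finset.sum_pos (fun j _ => pow_pos hqpos j) ⟨0, by simpa using hm⟩).ne'
          rw [h0, zero_mul, zero_pow hs0, zero_pow ht.ne'] at this
          exact zero_ne_one this
        rw [eq_div_iff (pow_ne_zero _ hd), ← hu.2]
        simp only [ζ, mul_pow]
        rw [mul_comm, hnorm (u + c i)]
        congr 1
        refine Finset.prod_congr rfl fun j _ => ?_
        rw [← hfrobs, sub_neg_eq_add])
    simpa using key
  have h1 := Finset.card_le_mul_card_image U m.factorial hfib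
  have h2 : (U.image ζ).card ≤ t ^ m := by
    calc (U.image ζ).card ≤ (Fintype.piFinset fun _ : Fin m => Z).card := by
          apply Finset.card_le_card
          intro z hz
          rw [Finset.mem_image] at hz
          obtain ⟨u, hu, rfl⟩ := hz
          rw [Fintype.mem_piFinset]
          intro i
          rw [Multiset.mem_toFinset, Polynomial.mem_nthRoots ht]
          exact hU u hu i
      _ = Z.card ^ m := by simp
      _ ≤ t ^ m := Nat.pow_le_pow_left hZ m
  calc U.card ≤ m.factorial * (U.image ζ).card := h1
    _ ≤ m.factorial * t ^ m := Nat.mul_le_mul_left _ h2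
    _ = _ := mul_comm _ _

/-- For an arbitrary prime power `q`, integer `r ≥ 2` and `t ∣ q−1`, the graph
`G(q^{r−1}, t(1+q+⋯+q^{r−2}))` is `K_{r, t^{r−1}(r−1)!+1}`-free: any `r` pairwise distinct
vertices have at most `t^{r−1}·(r−1)!` common neighbors. -/
theorem G_Kr_t_free {q r t : ℕ} (hq : IsPrimePow q) (hr : 2 ≤ r) (ht : t ∣ q - 1)
    {F : Type} [Field F] [Fintype F] (hF : Fintype.card F = q ^ (r - 1))
    (H : Subgroup Fˣ) (hH : Nat.card H = t * ∑ j ∈ Finset.range (r - 1), q ^ j)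
    (v : Fin r → GVertex F H) (hv : Function.Injective v) :
    {w : GVertex F H | ∀ i : Fin r, GAdj H w (v i)}.ncard ≤
      t ^ (r - 1) * (r - 1).factorial := by
  classical
  obtain ⟨m, rfl⟩ : ∃ m, r = m + 1 := ⟨r - 1, by omega⟩
  simp only [Nat.add_sub_cancel] at *
  have hm : 0 < m := by omega
  set W := {w : GVertex F H | ∀ i, GAdj H w (v i)} with hW
  have htpos : 0 < t := by
    rcases Nat.eq_zero_or_pos t with h | h
    · have h0 : 0 < Nat.card H := Nat.card_pos
      rw [hH, h, zero_mul] at h0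
      exact absurd h0 (lt_irrefl _)
    · exact h
  have hHpow : ∀ x : F, memH H x → (x ^ (∑ j ∈ Finset.range m, q ^ j)) ^ t = 1 := by
    rintro _ ⟨h, hh, rfl⟩
    have := pow_card_eq_one' (x := (⟨h, hh⟩ : H))
    rw [hH, mul_comm, pow_mul] at this
    have h2 := congrArg (fun y : H => ((y : Fˣ) : F)) this
    simpa using h2
  have hrep : ∀ i, ∃ p : {p : F × F // p ≠ 0}, v i = Quot.mk _ p := fun i => by
    obtain ⟨p, hp⟩ := Quot.exists_rep (v i)
    exact ⟨p, hp.symm⟩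
  choose P hP using hrep
  let L : Fin (m + 1) → F × F → F := fun i p => p.1 * (P i).1.1 + p.2 * (P i).1.2
  -- normalised representatives of common neighbours
  have hnr : ∀ w ∈ W, ∃ p : {p : F × F // p ≠ 0}, w = Quot.mk _ p ∧ (∀ i, memH H (L i p.1)) ∧
      L 0 p.1 = 1 := by
    intro w hw
    obtain ⟨p, rfl⟩ := Quot.exists_rep w
    have hL : ∀ i, memH H (L i p.1) := by
      intro i
      have := hw i
      rw [hP i] at this
      exact GAdj_mk this
    obtain ⟨h, hh, hh0⟩ := hL 0
    refine ⟨⟨((h⁻¹ : Fˣ) * p.1.1, (h⁻¹ : Fˣ) * p.1.2), ?_⟩, ?_, ?_, ?_⟩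
    · intro h0
      apply p.2
      rw [Prod.ext_iff] at h0 ⊢
      simpa using h0
    · exact Quot.sound ⟨h, hh, by simp, by simp⟩
    · intro i
      have := memH_mul ⟨h⁻¹, H.inv_mem hh, rfl⟩ (hL i)
      convert this using 1
      simp only [L]; ring
    · have : ((h⁻¹ : Fˣ) : F) * L 0 p.1 = 1 := by rw [← hh0]; simp
      rw [← this]
      simp only [L]; ring
  rcases W.eq_empty_or_nonempty with hWe | ⟨w0, hw0⟩
  · rw [hWe]; simp
  let D : Fin (m + 1) → Fin (m + 1) → F := fun i j =>
    (P i).1.1 * (P j).1.2 - (P j).1.1 * (P i).1.2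
  have hD : ∀ i j, i ≠ j → D i j ≠ 0 := by
    intro i j hij h0
    obtain ⟨p, -, hp, -⟩ := hnr w0 hw0
    obtain ⟨h, hh, h1⟩ := hp i
    obtain ⟨k, hk, k1⟩ := hp j
    apply hij
    apply hv
    rw [hP i, hP j]
    apply Quot.sound
    have e1 : (P i).1.1 * L j p.1 = L i p.1 * (P j).1.1 := by
      simp only [L, D] at h0 ⊢
      linear_combination p.1.2 * h0
    have e2 : (P i).1.2 * L j p.1 = L i p.1 * (P j).1.2 := by
      simp only [L, D] at h0 ⊢
      linear_combination - p.1.1 * h0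
    rw [← h1, ← k1] at e1 e2
    have hk0 : (k : F) ≠ 0 := k.ne_zero
    refine ⟨h * k⁻¹, H.mul_mem hh (H.inv_mem hk), ?_, ?_⟩
    · push_cast
      field_simp
      linear_combination e1
    · push_cast
      field_simp
      linear_combination e2
  have : Nonempty {p : F × F // p ≠ 0} := ⟨P 0⟩
  choose! R hR1 hR2 hR3 using hnr
  let o : Fin (m + 1) := Fin.succ ⟨0, hm⟩
  have ho : (0 : Fin (m + 1)) ≠ o := (Fin.succ_ne_zero _).symm
  let f : GVertex F H → F := fun w => L o (R w).1
  have hfinj : Set.InjOn f W := by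
    intro w hw w' hw' h
    rw [hR1 w hw, hR1 w' hw']
    congr 1
    have h0 : L 0 (R w).1 = L 0 (R w').1 := by rw [hR3 w hw, hR3 w' hw']
    have h1 : L o (R w).1 = L o (R w').1 := h
    have hd := hD 0 o ho
    apply Subtype.ext
    apply Prod.ext
    · apply mul_left_cancel₀ hd
      simp only [L, D] at h0 h1 ⊢
      linear_combination (P o).1.2 * h0 - (P 0).1.2 * h1
    · apply mul_left_cancel₀ hd
      simp only [L, D] at h0 h1 ⊢
      linear_combination - (P o).1.1 * h0 + (P 0).1.1 * h1
  let U : Finset F := (f '' W).toFinset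
  have hcard : W.ncard = U.card := by
    rw [← Set.InjOn.ncard_image hfinj, Set.ncard_eq_toFinset_card']
  rw [hcard]
  have hDs : ∀ i : Fin m, D 0 i.succ ≠ 0 := fun i => hD _ _ (Fin.succ_ne_zero _).symm
  refine count_u hq hm hF htpos (fun i => D i.succ o / D 0 i.succ)
    (fun i => D 0 i.succ / D 0 o) ?_ U ?_
  · intro i j hij
    by_contra hne
    have hne' : i.succ ≠ j.succ := fun h => hne (Fin.succ_injective _ h)
    have h1 := hDs i
    have h2 := hDs j
    simp only at hij
    rw [div_eq_div_iff h1 h2] at hij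
    apply mul_ne_zero (hD 0 o ho) (hD _ _ hne')
    simp only [D] at hij ⊢
    linear_combination hij
  · intro u hu i
    rw [Set.mem_toFinset] at hu
    obtain ⟨w, hw, rfl⟩ := hu
    have e : D 0 i.succ / D 0 o * (f w + D i.succ o / D 0 i.succ) = L i.succ (R w).1 := by
      have h1 := hDs i
      have h2 := hD 0 o ho
      have h3 := hR3 w hw
      have : D 0 i.succ * f w + D i.succ o = D 0 o * L i.succ (R w).1 := by
        have : D 0 i.succ * f w + D i.succ o * L 0 (R w).1 = D 0 o * L i.succ (R w).1 := by
          simp only [D, L, f]; ring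
        rwa [h3, mul_one] at this
      rw [div_mul_eq_mul_div, div_eq_iff h2, mul_add, mul_div_cancel₀ _ h1]
      linear_combination this
    rw [e]
    exact hHpow _ (hR2 w hw _)
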